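/- arXiv:1911.02137 — 4 statements merged into one kernel-verified Lean document; each statement's English description precedes it below -/
import Mathlib

section
/- Let n = 3·2^s with s ≥ 2 and F_n = ℚ(ζ_n + ζ_n⁻¹). Then every unit of the ring of integers of F_n has norm 1 down to ℚ, and there is no element of the ring of integers of F_n whose norm to ℚ equals 2. -/
/-!
Suppose a number field `L` contains `√d`, where a prime `p` divides `d` exactly once. The norm of an
algebraic integer of `L` is the norm of an algebraic integer `y` of `ℚ(√d)`, and
`4 N(y) = Tr(y) ^ 2 - d b ^ 2` with `b` rational and `d b ^ 2` an integer; exact divisibility forces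
`p ∣ d b ^ 2`, so `N(y)` is a square modulo `p`. When `p ≡ 3 mod 8`, neither `-1` nor `2` is a
square modulo `p`. For the theorem take `p = d = 3`: a suitable power `w` of `ζ` is a primitive
twelfth root of unity, and `w + w⁻¹` is a square root of `3` in `F`.
-/

open Polynomial NumberField

theorem dvd_right_of_isSquare_mul {M : Type*} [CommMonoidWithZero M] [IsCancelMulZero M]
    {p d k : M} (hp : Prime p) (hpd : p ∣ d) (hpd' : ¬ p ^ 2 ∣ d) (h : IsSquare (d * k)) :
    p ∣ k := by
  obtain ⟨c, hc⟩ := h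
  have hpc : p ∣ c := hp.dvd_of_dvd_pow (n := 2) (by rw [sq, ← hc]; exact hpd.mul_right k)
  obtain ⟨e, rfl⟩ := hpd
  have hpek : p ∣ e * k := by
    rw [← mul_dvd_mul_iff_left hp.ne_zero, ← mul_assoc, hc]
    exact mul_dvd_mul hpc hpc
  refine (hp.dvd_or_dvd hpek).resolve_left fun hpe ↦ hpd' ?_
  rw [sq]
  exact mul_dvd_mul_left p hpe

theorem not_isSquare_of_dvd_of_not_sq_dvd {M : Type*} [CommMonoidWithZero M] [IsCancelMulZero M]
    {p d : M} (hp : Prime p) (hpd : p ∣ d) (hpd' : ¬ p ^ 2 ∣ d) : ¬ IsSquare d := fun h ↦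
  hp.not_dvd_one (dvd_right_of_isSquare_mul hp hpd hpd' (by rwa [mul_one]))

theorem algebraNorm_eq_quadraticAlgebraNorm {R : Type*} [CommRing R] {a b : R}
    (z : QuadraticAlgebra R a b) : Algebra.norm R z = z.norm := by
  rw [← QuadraticAlgebra.det_toLinearMap_eq_norm, Algebra.norm_apply]
  rfl

theorem isIntegral_quadraticAlgebra_trace {A R : Type*} [CommRing A] [CommRing R] [Algebra A R]
    {a b : R} {z : QuadraticAlgebra R a b} (hz : IsIntegral A z) : IsIntegral A z.trace := by
  let conj : QuadraticAlgebra R a b →ₐ[A] QuadraticAlgebra R a b :=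
    { starRingEnd (QuadraticAlgebra R a b) with
      commutes' r := by
        ext <;> simp [Algebra.algebraMap_eq_smul_one, starRingEnd_apply, QuadraticAlgebra.im_one] }
  have hstar : IsIntegral A (star z) := hz.map conj
  have h := hz.add hstar
  rw [← QuadraticAlgebra.algebraMap_trace_eq_add_star] at h
  exact (isIntegral_algebraMap_iff QuadraticAlgebra.algebraMap_injective).1 h

section PrimeExactlyDividing

variable {p : ℕ} [Fact p.Prime] {d : ℤ}

theorem isSquare_zmod_of_quadraticAlgebra_norm_eq (hpd : (p : ℤ) ∣ d) (hpd' : ¬ (p : ℤ) ^ 2 ∣ d)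
    {z : QuadraticAlgebra ℚ d 0} (hz : IsIntegral ℤ z) {m : ℤ} (hm : z.norm = m) :
    IsSquare (m : ZMod p) := by
  obtain ⟨A, hA⟩ := IsIntegrallyClosed.isIntegral_iff.1 (isIntegral_quadraticAlgebra_trace hz)
  have hre : (A : ℚ) = 2 * z.re := by simpa [QuadraticAlgebra.trace_def] using hA
  have hnorm : (m : ℚ) = z.re ^ 2 - d * z.im ^ 2 := by
    rw [← hm, QuadraticAlgebra.norm_def]; ring
  have hsq : IsSquare (d * (A ^ 2 - 4 * m)) := by
    rw [← Rat.isSquare_intCast_iff]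
    refine ⟨d * (2 * z.im), ?_⟩
    push_cast
    rw [hre, hnorm]
    ring
  have hdvd : (p : ℤ) ∣ A ^ 2 - 4 * m :=
    dvd_right_of_isSquare_mul (Nat.prime_iff_prime_int.1 Fact.out) hpd hpd' hsq
  have hmod : (A : ZMod p) ^ 2 = 4 * m := by
    rw [← sub_eq_zero]
    exact_mod_cast (ZMod.intCast_zmod_eq_zero_iff_dvd _ p).2 hdvd
  rcases eq_or_ne p 2 with rfl | hp2
  · exact FiniteField.isSquare_of_char_two (ZMod.ringChar_zmod_n 2) _
  · have h2 : (2 : ZMod p) ≠ 0 := Ring.two_ne_zero (by rwa [ZMod.ringChar_zmod_n])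
    refine ⟨A / 2, ?_⟩
    field_simp
    linear_combination -hmod

variable {L : Type*} [Field L] [NumberField L] {t : L}

theorem isSquare_zmod_norm_of_sq_eq (hpd : (p : ℤ) ∣ d) (hpd' : ¬ (p : ℤ) ^ 2 ∣ d)
    (ht : t ^ 2 = d) (x : 𝓞 L) : IsSquare (Algebra.norm ℤ x : ZMod p) := by
  have hd : ¬ IsSquare (d : ℚ) := by
    rw [Rat.isSquare_intCast_iff]
    exact not_isSquare_of_dvd_of_not_sq_dvd (Nat.prime_iff_prime_int.1 Fact.out) hpd hpd'
  have : Fact (∀ r : ℚ, r ^ 2 ≠ d + 0 * r) := ⟨fun r hr ↦ hd ⟨r, by linear_combination -hr⟩⟩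
  let f : QuadraticAlgebra ℚ d 0 →ₐ[ℚ] L :=
    QuadraticAlgebra.lift ⟨t, by simp [← sq, ht, Algebra.smul_def]⟩
  let : Algebra (QuadraticAlgebra ℚ d 0) L := f.toRingHom.toAlgebra
  have : IsScalarTower ℚ (QuadraticAlgebra ℚ d 0) L :=
    IsScalarTower.of_algebraMap_eq fun r ↦ (f.commutes r).symm
  have : IsScalarTower ℤ (QuadraticAlgebra ℚ d 0) L :=
    IsScalarTower.of_algebraMap_eq' (RingHom.ext_int _ _)
  have : FiniteDimensional (QuadraticAlgebra ℚ d 0) L := FiniteDimensional.right ℚ _ L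
  refine isSquare_zmod_of_quadraticAlgebra_norm_eq hpd hpd'
    (Algebra.isIntegral_norm (QuadraticAlgebra ℚ d 0) x.isIntegral_coe) ?_
  rw [← algebraNorm_eq_quadraticAlgebraNorm, Algebra.norm_norm, Algebra.coe_norm_int]

theorem units_norm_one_and_no_norm_two_general (hp : p % 8 = 3) (hpd : (p : ℤ) ∣ d)
    (hpd' : ¬ (p : ℤ) ^ 2 ∣ d) (ht : t ^ 2 = d) :
    (∀ u : (𝓞 L)ˣ, Algebra.norm ℚ ((u : 𝓞 L) : L) = 1) ∧
    ¬ ∃ x : 𝓞 L, Algebra.norm ℚ (x : L) = 2 := by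
  have hsq : ∀ x : 𝓞 L, IsSquare (Algebra.norm ℤ x : ZMod p) :=
    isSquare_zmod_norm_of_sq_eq hpd hpd' ht
  simp only [← Algebra.coe_norm_int]
  constructor
  · intro u
    rcases Int.isUnit_iff.1 (u.isUnit.map (Algebra.norm ℤ)) with h | h
    · exact_mod_cast h
    · have hneg : IsSquare (-1 : ZMod p) := by simpa [h] using hsq u
      exact absurd (show p % 4 = 3 by omega) (ZMod.exists_sq_eq_neg_one_iff.1 hneg)
  · rintro ⟨x, hx⟩
    have h : Algebra.norm ℤ x = 2 := by exact_mod_cast hx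
    have htwo : IsSquare (2 : ZMod p) := by simpa [h] using hsq x
    have := (ZMod.exists_sq_eq_two_iff (by omega)).1 htwo
    omega

end PrimeExactlyDividing

section SqrtThree

theorem pow_add_pow_mem_subring_of_mul_eq_one {R : Type*} [CommRing R] (S : Subring R) {x y : R}
    (hxy : x * y = 1) (h : x + y ∈ S) (k : ℕ) : x ^ k + y ^ k ∈ S := by
  rw [← dickson_one_one_eval_add_inv x y hxy, ← map_one S.subtype, ← map_dickson, eval_map]
  change eval₂ S.subtype (S.subtype ⟨x + y, h⟩) (dickson 1 1 k) ∈ S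
  rw [eval₂_at_apply]
  exact SetLike.coe_mem _

variable {K : Type*} [Field K]

theorem add_inv_sq_eq_three_of_isPrimitiveRoot_twelve {w : K} (hw : IsPrimitiveRoot w 12) :
    (w + w⁻¹) ^ 2 = 3 := by
  have hw0 : w ≠ 0 := hw.ne_zero (by norm_num)
  have h6 : w ^ 6 = -1 := (hw.pow (by norm_num) rfl).eq_neg_one_of_two_right
  have h4 : 1 + w ^ 4 + (w ^ 4) ^ 2 = 0 := by
    simpa [Finset.sum_range_succ] using
      (hw.pow (a := 4) (b := 3) (by norm_num) rfl).geom_sum_eq_zero (by norm_num)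
  field_simp
  linear_combination h4 - w ^ 2 * h6

theorem exists_sq_eq_three_of_add_inv_mem (S : Subring K) {n : ℕ} [NeZero n] (hn : 12 ∣ n)
    {ζ : K} (hζ : IsPrimitiveRoot ζ n) (h : ζ + ζ⁻¹ ∈ S) : ∃ t : S, t ^ 2 = 3 := by
  obtain ⟨k, hk⟩ := hn
  have hw : IsPrimitiveRoot (ζ ^ k) 12 := hζ.pow (NeZero.pos n) (by rw [hk, mul_comm])
  have hmem : ζ ^ k + ζ⁻¹ ^ k ∈ S :=
    pow_add_pow_mem_subring_of_mul_eq_one S (mul_inv_cancel₀ (hζ.ne_zero (NeZero.ne n))) h k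
  refine ⟨⟨ζ ^ k + ζ⁻¹ ^ k, hmem⟩, Subtype.ext ?_⟩
  change (ζ ^ k + ζ⁻¹ ^ k) ^ 2 = 3
  rw [inv_pow, add_inv_sq_eq_three_of_isPrimitiveRoot_twelve hw]

end SqrtThree

/-- For `n = 3·2^s`, `s ≥ 2`, and `F = ℚ(ζ_n + ζ_n⁻¹)`: every unit of the ring of
integers of `F` has norm `1`, and no element of the ring of integers has norm `2`. -/
theorem units_norm_one_and_no_norm_two (s : ℕ) (hs : 2 ≤ s) (n : ℕ)
    (hn : n = 3 * 2 ^ s) (ζ : ℂ) (hζ : IsPrimitiveRoot ζ n)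
    (F : IntermediateField ℚ ℂ) (hF : F = IntermediateField.adjoin ℚ {ζ + ζ⁻¹})
    [FiniteDimensional ℚ ↥F] :
    (∀ u : (NumberField.RingOfIntegers ↥F)ˣ,
      Algebra.norm ℚ (((u : NumberField.RingOfIntegers ↥F) : ↥F)) = 1) ∧
    ¬ ∃ x : NumberField.RingOfIntegers ↥F, Algebra.norm ℚ ((x : ↥F)) = 2 := by
  have : NumberField F := ⟨⟩
  have : NeZero n := ⟨by rw [hn]; positivity⟩
  have h12 : 12 ∣ n := hn ▸ mul_dvd_mul_left 3 (pow_dvd_pow 2 hs)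
  have hmem : ζ + ζ⁻¹ ∈ F := hF ▸ IntermediateField.mem_adjoin_simple_self ℚ _
  obtain ⟨t, ht⟩ := exists_sq_eq_three_of_add_inv_mem F.toSubfield.toSubring h12 hζ hmem
  exact units_norm_one_and_no_norm_two_general (p := 3) (d := 3) (t := t) (by norm_num)
    (by norm_num) (by norm_num) (by exact_mod_cast ht)
end

section
/- Let n = 2^s or n = 3·2^s with n ≥ 8, K_n = ℚ(ζ_n), and R_n = ℤ[ζ_n, 1/2]. If α ∈ R_n satisfies α·ᾱ = 1 (where ᾱ denotes complex conjugation), then α is a root of unity in K_n, i.e., α ∈ μ_n. -/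
/-!
Write `n = p ^ s * m` with `m ∣ p ^ j + 1`. Modulo a prime `P` above `p`, raising to the power
`p ^ s` is injective, so `ζ ^ m ≡ 1` and hence `ζ⁻¹ ≡ ζ ^ (p ^ j)`: complex conjugation is
congruent to the `j`-th power of Frobenius and therefore fixes every prime above `p`. If
`b = p ^ k * α` is integral, then `b * b̄ = p ^ (2 * k)`, so all prime factors of `(b)` lie above
`p` and `(b) = (b̄)`. Thus `(b) ^ 2 = (p ^ k) ^ 2`, and `α` is already an algebraic integer. All its
conjugates have absolute value `1` because conjugation is central in the Galois group, and
Kronecker's theorem makes `α` a root of unity.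
-/

open NumberField UniqueFactorizationMonoid

section Stable

variable {R : Type*} [CommRing R]

lemma ideal_map_eq_self_of_forall_isPrime [IsDedekindDomain R] {σ : R →+* R} {I : Ideal R}
    (hσ : ∀ P : Ideal R, P.IsPrime → I ≤ P → P.map σ = P) : I.map σ = I := by
  obtain rfl | hI := eq_or_ne I ⊥
  · exact Ideal.map_bot
  have factors_map : (normalizedFactors I).map (Ideal.map σ) = normalizedFactors I := by
    conv_rhs => rw [← Multiset.map_id (normalizedFactors I)]
    refine Multiset.map_congr rfl fun P hP => hσ P ?_ ?_
    · exact Ideal.isPrime_of_prime (prime_of_normalized_factor P hP)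
    · exact Ideal.le_of_dvd (dvd_of_mem_normalizedFactors hP)
  calc I.map σ
      = ((normalizedFactors I).prod).map σ := by
        rw [Ideal.prod_normalizedFactors_eq_self hI]
    _ = ((normalizedFactors I).map (Ideal.map σ)).prod :=
        map_multiset_prod (Ideal.mapHom σ) _
    _ = I := by rw [factors_map, Ideal.prod_normalizedFactors_eq_self hI]

lemma dvd_of_mul_apply_eq_sq [IsDedekindDomain R] {σ : R →+* R} {a b : R}
    (hσ : ∀ P : Ideal R, P.IsPrime → a ∈ P → P.map σ = P) (h : b * σ b = a ^ 2) : a ∣ b := by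
  have map_span : (Ideal.span {b}).map σ = Ideal.span {b} := by
    refine ideal_map_eq_self_of_forall_isPrime fun P hP hbP => hσ P hP (hP.mem_of_pow_mem 2 ?_)
    rw [← h]
    exact P.mul_mem_right _ (hbP (Ideal.mem_span_singleton_self b))
  have apply_dvd : σ b ∣ b := by
    rw [← Ideal.span_singleton_le_span_singleton, ← map_span, Ideal.map_span, Set.image_singleton]
  refine (IsIntegrallyClosed.pow_dvd_pow_iff two_ne_zero).mp ?_
  rw [← h, sq]
  exact mul_dvd_mul_left b apply_dvd

variable {ζ : R} {p s m j : ℕ}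

lemma apply_apply_eq_pow_of_adjoin_eq_top {B : Type*} [CommRing B] [IsReduced B] [ExpChar B p]
    (hζ : Algebra.adjoin ℤ {ζ} = ⊤) (hroot : ζ ^ (p ^ s * m) = 1) (hm : m ∣ p ^ j + 1)
    {σ : R →+* R} (hσ : ζ * σ ζ = 1) (f : R →+* B) (x : R) : f (σ x) = f x ^ p ^ j := by
  have pow_m : f ζ ^ m = 1 := by
    rw [← ExpChar.pow_prime_pow_mul_eq_one_iff p s, ← map_pow, hroot, map_one]
  have pow_succ_eq_one : f ζ ^ p ^ j * f ζ = 1 := by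
    rw [← pow_succ]
    exact orderOf_dvd_iff_pow_eq_one.mp ((orderOf_dvd_of_pow_eq_one pow_m).trans hm)
  have eq_on_generator : f (σ ζ) = f ζ ^ p ^ j :=
    (left_inv_eq_right_inv pow_succ_eq_one (by rw [← map_mul, hσ, map_one])).symm
  have homs_eq : (f.comp σ).toIntAlgHom = ((iterateFrobenius B p j).comp f).toIntAlgHom :=
    AlgHom.ext_of_adjoin_eq_top hζ (Set.eqOn_singleton.mpr eq_on_generator)
  exact DFunLike.congr_fun homs_eq x

lemma map_prime_ideal_eq_self_of_natCast_mem (hp : p.Prime)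
    (hζ : Algebra.adjoin ℤ {ζ} = ⊤) (hroot : ζ ^ (p ^ s * m) = 1) (hm : m ∣ p ^ j + 1)
    {σ : R ≃+* R} (hσ : ζ * σ ζ = 1) {P : Ideal R} (hP : P.IsPrime) (hpP : (p : R) ∈ P) :
    P.map (σ : R →+* R) = P := by
  have : CharP (R ⧸ P) p := (CharP.charP_iff_prime_eq_zero hp).mpr <| by
    rw [← map_natCast (Ideal.Quotient.mk P)]
    exact Ideal.Quotient.eq_zero_iff_mem.mpr hpP
  have : ExpChar (R ⧸ P) p := .prime hp
  have comap_eq : P.comap (σ : R →+* R) = P := by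
    ext x
    rw [Ideal.mem_comap, ← Ideal.Quotient.eq_zero_iff_mem, ← Ideal.Quotient.eq_zero_iff_mem,
      apply_apply_eq_pow_of_adjoin_eq_top hζ hroot hm hσ, pow_eq_zero_iff]
    exact pow_ne_zero j hp.ne_zero
  conv_lhs => rw [← comap_eq]
  exact Ideal.map_comap_of_surjective _ σ.surjective P

end Stable

section CyclotomicField

variable {K : Type*} [Field K] [CharZero K] {n : ℕ} [NeZero n] [IsCyclotomicExtension {n} ℚ K]
  {ζ : K}

lemma isIntegral_of_mul_apply_eq_one (hζ : IsPrimitiveRoot ζ n) {p s m j : ℕ} (hp : p.Prime)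
    (hn : n = p ^ s * m) (hm : m ∣ p ^ j + 1) {c : K ≃+* K} (hc : c ζ = ζ⁻¹) {x : K} {k : ℕ}
    (hx : IsIntegral ℤ ((p : K) ^ k * x)) (hxc : x * c x = 1) : IsIntegral ℤ x := by
  have : NumberField K := IsCyclotomicExtension.numberField {n} ℚ K
  let σ : 𝓞 K ≃+* 𝓞 K := RingOfIntegers.mapRingEquiv c
  have generates : Algebra.adjoin ℤ {hζ.toInteger} = ⊤ :=
    IsCyclotomicExtension.adjoin_primitive_root_eq_top hζ.toInteger_isPrimitiveRoot
  have root_pow : hζ.toInteger ^ (p ^ s * m) = 1 := hn ▸ hζ.toInteger_isPrimitiveRoot.pow_eq_one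
  have root_mul : hζ.toInteger * σ hζ.toInteger = 1 := by
    ext
    change ζ * c ζ = 1
    rw [hc, mul_inv_cancel₀ (hζ.ne_zero (NeZero.ne n))]
  let b : 𝓞 K := ⟨(p : K) ^ k * x, hx⟩
  have pow_dvd : (p : 𝓞 K) ^ k ∣ b := by
    refine dvd_of_mul_apply_eq_sq (σ := (σ : 𝓞 K →+* 𝓞 K)) (fun P hP hpP => ?_) ?_
    · exact map_prime_ideal_eq_self_of_natCast_mem hp generates root_pow hm root_mul hP
        (hP.mem_of_pow_mem k hpP)
    · ext
      change (p : K) ^ k * x * c ((p : K) ^ k * x) = ((p : K) ^ k) ^ 2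
      rw [map_mul, map_pow, map_natCast]
      linear_combination ((p : K) ^ k) ^ 2 * hxc
  obtain ⟨y, hy⟩ := pow_dvd
  have x_eq : x = y := by
    apply mul_left_cancel₀ (pow_ne_zero k (Nat.cast_ne_zero.mpr hp.ne_zero) : (p : K) ^ k ≠ 0)
    exact congrArg (algebraMap (𝓞 K) K) hy |>.trans (by simp)
  exact x_eq ▸ y.isIntegral_coe

lemma conj_apply_eq_apply_of_apply_eq_inv (hζ : IsPrimitiveRoot ζ n) {c : K →+* K}
    (hc : c ζ = ζ⁻¹) (φ : K →+* ℂ) (x : K) : starRingEnd ℂ (φ x) = φ (c x) := by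
  have eq_on_root : starRingEnd ℂ (φ ζ) = φ (c ζ) := by
    rw [hc, map_inv₀, Complex.inv_eq_conj]
    exact Complex.norm_eq_one_of_pow_eq_one (by rw [← map_pow, hζ.pow_eq_one, map_one])
      (NeZero.ne n)
  have homs_eq : ((starRingEnd ℂ).comp φ).toRatAlgHom = (φ.comp c).toRatAlgHom :=
    (hζ.powerBasis ℚ).algHom_ext (by simpa using eq_on_root)
  exact DFunLike.congr_fun homs_eq x

lemma exists_eq_pow_of_isOfFinOrder (hζ : IsPrimitiveRoot ζ n) (hn : Even n) {x : K}
    (hx : IsOfFinOrder x) : ∃ k : ℕ, x = ζ ^ k := by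
  have : NumberField K := IsCyclotomicExtension.numberField {n} ℚ K
  have : NeZero (orderOf x) := ⟨hx.orderOf_pos.ne'⟩
  have orderOf_dvd : orderOf x ∣ n := by
    simpa [IsCyclotomicExtension.Rat.torsionOrder_eq (n := n), hn] using
      Units.dvd_torsionOrder_of_isPrimitiveRoot (IsPrimitiveRoot.orderOf x)
  obtain ⟨k, -, hk⟩ := hζ.eq_pow_of_pow_eq_one (orderOf_dvd_iff_pow_eq_one.mp orderOf_dvd)
  exact ⟨k, hk.symm⟩

lemma exists_eq_pow_of_isIntegral_of_mul_apply_eq_one (hζ : IsPrimitiveRoot ζ n)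
    (hn : Even n) {c : K →+* K} (hc : c ζ = ζ⁻¹) {x : K} (hx : IsIntegral ℤ x)
    (hxc : x * c x = 1) : ∃ k : ℕ, x = ζ ^ k := by
  have : NumberField K := IsCyclotomicExtension.numberField {n} ℚ K
  have norm_eq_one (φ : K →+* ℂ) : ‖φ x‖ = 1 := by
    have norm_sq : (‖φ x‖ : ℂ) ^ 2 = 1 := by
      rw [← Complex.mul_conj', conj_apply_eq_apply_of_apply_eq_inv hζ hc, ← map_mul, hxc, map_one]
    exact (pow_eq_one_iff_of_nonneg (norm_nonneg _) two_ne_zero).mp (by exact_mod_cast norm_sq)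
  obtain ⟨r, hr, hxr⟩ := Embeddings.pow_eq_one_of_norm_eq_one K ℂ hx norm_eq_one
  exact exists_eq_pow_of_isOfFinOrder hζ hn (isOfFinOrder_iff_pow_eq_one.mpr ⟨r, hr, hxr⟩)

lemma exists_algEquiv_apply_eq_inv (hζ : IsPrimitiveRoot ζ n) : ∃ c : K ≃ₐ[ℚ] K, c ζ = ζ⁻¹ := by
  have irreducible_cyclotomic := Polynomial.cyclotomic.irreducible_rat (NeZero.pos n)
  have minpoly_eq : minpoly ℚ ζ = minpoly ℚ ζ⁻¹ :=
    (hζ.minpoly_eq_cyclotomic_of_irreducible irreducible_cyclotomic).symm.trans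
      (hζ.inv.minpoly_eq_cyclotomic_of_irreducible irreducible_cyclotomic)
  refine ⟨(hζ.powerBasis ℚ).equivOfMinpoly (hζ.inv.powerBasis ℚ) (by simpa using minpoly_eq), ?_⟩
  simpa using (hζ.powerBasis ℚ).equivOfMinpoly_gen (hζ.inv.powerBasis ℚ)
    (by simpa using minpoly_eq)

lemma exists_eq_pow_of_isIntegral_pow_mul (hζ : IsPrimitiveRoot ζ n) {p s m j : ℕ}
    (hp : p.Prime) (hn : n = p ^ s * m) (hm : m ∣ p ^ j + 1) (hn_even : Even n) {x : K} {k : ℕ}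
    (hx : IsIntegral ℤ ((p : K) ^ k * x)) (φ : K →+* ℂ) (hφ : φ x * starRingEnd ℂ (φ x) = 1) :
    ∃ r : ℕ, x = ζ ^ r := by
  obtain ⟨c, hc⟩ := exists_algEquiv_apply_eq_inv hζ
  have mul_apply : x * c x = 1 := φ.injective <| by
    rw [map_mul, map_one, ← hφ,
      conj_apply_eq_apply_of_apply_eq_inv hζ (c := (c : K →+* K)) hc, RingHom.coe_coe]
  have integral : IsIntegral ℤ x :=
    isIntegral_of_mul_apply_eq_one hζ hp hn hm (c := (c : K ≃+* K)) hc hx mul_apply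
  exact exists_eq_pow_of_isIntegral_of_mul_apply_eq_one hζ hn_even (c := (c : K →+* K)) hc
    integral mul_apply

end CyclotomicField

open scoped Pointwise in
lemma exists_isIntegral_pow_mul_of_mem_adjoin_inv {A F : Type*} [CommRing A] [Field F] [Algebra A F]
    {a z x : F} (ha : IsIntegral A a) (hz : IsIntegral A z)
    (hx : x ∈ Algebra.adjoin A {z, a⁻¹}) : ∃ k : ℕ, IsIntegral A (a ^ k * x) := by
  have smul_subset : a • ({z, a⁻¹} : Set F) ⊆ integralClosure A F := by
    rintro _ ⟨y, rfl | rfl, rfl⟩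
    · exact ha.mul hz
    · obtain rfl | ha0 := eq_or_ne a 0
      · simp
      · simp [ha0]
  obtain ⟨k, hk⟩ := Algebra.pow_smul_mem_of_smul_subset_of_mem_adjoin a _ (integralClosure A F)
    smul_subset hx ha
  exact ⟨k, hk k le_rfl⟩

open IntermediateField

lemma isCyclotomicExtension_adjoin_simple (F : Type*) {L : Type*} [Field F] [Field L] [Algebra F L]
    {n : ℕ} [NeZero n] {ζ : L} (hζ : IsPrimitiveRoot ζ n) : IsCyclotomicExtension {n} F F⟮ζ⟯ := by
  change IsCyclotomicExtension {n} F F⟮ζ⟯.toSubalgebra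
  rw [adjoin_simple_toSubalgebra_of_isAlgebraic
    ((hζ.isIntegral (NeZero.pos n)).tower_top (A := F)).isAlgebraic]
  exact hζ.adjoin_isCyclotomicExtension F

theorem norm_one_element_is_root_of_unity_general {p s m j n : ℕ} (hp : p.Prime)
    (hn : n = p ^ s * m) (hm : m ∣ p ^ j + 1) (hn_even : Even n) {ζ : ℂ}
    (hζ : IsPrimitiveRoot ζ n) {α : ℂ} (hα : α ∈ Algebra.adjoin ℤ {ζ, (p : ℂ)⁻¹})
    (h1 : α * starRingEnd ℂ α = 1) : ∃ k : ℕ, α = ζ ^ k := by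
  have : NeZero n :=
    ⟨hn ▸ mul_ne_zero (pow_ne_zero s hp.ne_zero) (ne_zero_of_dvd_ne_zero (by simp) hm)⟩
  have : IsCyclotomicExtension {n} ℚ ℚ⟮ζ⟯ := isCyclotomicExtension_adjoin_simple ℚ hζ
  have adjoin_le : Algebra.adjoin ℤ {ζ, (p : ℂ)⁻¹} ≤ ℚ⟮ζ⟯.toSubalgebra.restrictScalars ℤ :=
    Algebra.adjoin_le <| Set.pair_subset (mem_adjoin_simple_self ℚ ζ)
      (ℚ⟮ζ⟯.inv_mem (ℚ⟮ζ⟯.natCast_mem p))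
  let α' : ℚ⟮ζ⟯ := ⟨α, adjoin_le hα⟩
  have root : IsPrimitiveRoot (AdjoinSimple.gen ℚ ζ) n :=
    IsPrimitiveRoot.coe_submonoidClass_iff.mp hζ
  obtain ⟨k, hk⟩ := exists_isIntegral_pow_mul_of_mem_adjoin_inv (isIntegral_natCast p)
    (hζ.isIntegral (NeZero.pos n)) hα
  have integral : IsIntegral ℤ ((p : ℚ⟮ζ⟯) ^ k * α') :=
    (isIntegral_algebraMap_iff (algebraMap ℚ⟮ζ⟯ ℂ).injective).mp (by simpa [α'] using hk)
  obtain ⟨r, hr⟩ := exists_eq_pow_of_isIntegral_pow_mul root hp hn hm hn_even integral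
    (algebraMap ℚ⟮ζ⟯ ℂ) h1
  exact ⟨r, congrArg Subtype.val hr⟩

/-- For `n = 2^s` or `n = 3·2^s` with `n ≥ 8`: if `α ∈ R_n = ℤ[ζ_n, 1/2]` satisfies
`α·ᾱ = 1`, then `α` is a root of unity in `ℚ(ζ_n)`, i.e. a power of `ζ_n`. -/
theorem norm_one_element_is_root_of_unity (s n : ℕ) (hn : n = 2 ^ s ∨ n = 3 * 2 ^ s)
    (hn8 : 8 ≤ n) (ζ : ℂ) (hζ : IsPrimitiveRoot ζ n) (α : ℂ)
    (hα : α ∈ Algebra.adjoin ℤ ({ζ, 2⁻¹} : Set ℂ))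
    (h1 : α * (starRingEnd ℂ) α = 1) :
    ∃ k : ℕ, α = ζ ^ k := by
  have n_even : Even n := by
    obtain ⟨t, rfl⟩ : ∃ t, s = t + 1 := Nat.exists_eq_succ_of_ne_zero (by rintro rfl; omega)
    grind
  rcases hn with rfl | rfl
  · exact norm_one_element_is_root_of_unity_general (m := 1) (j := 1) Nat.prime_two
      (mul_one _).symm (one_dvd _) n_even hζ (by exact_mod_cast hα) h1
  · exact norm_one_element_is_root_of_unity_general (m := 3) (j := 1) Nat.prime_two
      (mul_comm _ _) (dvd_refl _) n_even hζ (by exact_mod_cast hα) h1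
end

section
/- Let O_L/O_M be a quadratic extension of Dedekind domains with Galois group generated by σ, and ATr(x) = x - σ(x). If two O_M-orders O, O' of O_L satisfy ATr(O) = ATr(O'), then O = O'. -/
/-!
The kernel of the antitrace on `O_L` is `O_L ∩ M`, which is `O_M` because `O_M` is integrally
closed. Every order contains `O_M`, so an order is recovered from its antitrace image as the full
preimage in `O_L`. That `M` is the whole fixed field of `σ` follows from `[L : M]` being prime,
which leaves no room for a proper intermediate ring.
-/

section Antitrace

variable {R S V : Type*} [CommRing R] [Ring S] [Algebra R S] [AddCommGroup V] [Module R V]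

/-- The antitrace `x ↦ x - σ x`, for an arbitrary linear endomorphism `σ` in place of the generator
of a Galois group. -/
def antitrace (σ : V →ₗ[R] V) : V →ₗ[R] V :=
  LinearMap.id - σ

theorem mem_ker_antitrace {σ : V →ₗ[R] V} {x : V} : x ∈ (antitrace σ).ker ↔ σ x = x :=
  sub_eq_zero.trans eq_comm

theorem map_antitrace_le_map_antitrace_iff {σ : S →ₗ[R] S} {B O O' : Subalgebra R S}
    (hB : ∀ x ∈ B, σ x = x → x ∈ (⊥ : Subalgebra R S)) (hO : O ≤ B) (hO' : O' ≤ B) :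
    O.toSubmodule.map (antitrace σ) ≤ O'.toSubmodule.map (antitrace σ) ↔ O ≤ O' := by
  refine ⟨fun h ↦ Subalgebra.toSubmodule.le_iff_le.1 ?_, fun h ↦ Submodule.map_mono h⟩
  have hker : (antitrace σ).ker ⊓ B.toSubmodule ≤ O'.toSubmodule := fun x hx ↦
    (bot_le : ⊥ ≤ O') (hB x hx.2 (mem_ker_antitrace.1 hx.1))
  have hsup : O.toSubmodule ≤ O'.toSubmodule ⊔ (antitrace σ).ker :=
    ((antitrace σ).map_le_map_iff).1 h
  calc O.toSubmodule ≤ (O'.toSubmodule ⊔ (antitrace σ).ker) ⊓ B.toSubmodule := le_inf hsup hO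
    _ = O'.toSubmodule ⊔ (antitrace σ).ker ⊓ B.toSubmodule := sup_inf_assoc_of_le _ hO'
    _ ≤ O'.toSubmodule := sup_le le_rfl hker

theorem map_antitrace_eq_map_antitrace_iff {σ : S →ₗ[R] S} {B O O' : Subalgebra R S}
    (hB : ∀ x ∈ B, σ x = x → x ∈ (⊥ : Subalgebra R S)) (hO : O ≤ B) (hO' : O' ≤ B) :
    O.toSubmodule.map (antitrace σ) = O'.toSubmodule.map (antitrace σ) ↔ O = O' := by
  simp only [le_antisymm_iff, map_antitrace_le_map_antitrace_iff hB hO hO',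
    map_antitrace_le_map_antitrace_iff hB hO' hO]

end Antitrace

theorem mem_bot_of_isIntegral_of_mem_range {A M L : Type*} [CommRing A] [CommRing M] [Ring L]
    [Algebra A M] [Algebra M L] [Algebra A L] [IsScalarTower A M L] [IsIntegrallyClosedIn A M]
    [FaithfulSMul M L] {x : L} (hx : IsIntegral A x) (hxM : x ∈ (algebraMap M L).range) :
    x ∈ (⊥ : Subalgebra A L) := by
  obtain ⟨m, rfl⟩ := hxM
  have hm : IsIntegral A m :=
    (isIntegral_algebraMap_iff (FaithfulSMul.algebraMap_injective M L)).1 hx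
  obtain ⟨a, rfl⟩ := IsIntegrallyClosedIn.isIntegral_iff.1 hm
  exact Algebra.mem_bot.2 ⟨a, IsScalarTower.algebraMap_apply A M L a⟩

theorem equalizer_eq_bot_of_finrank_prime {F E S : Type*} [Field F] [Ring E] [IsDomain E]
    [Algebra F E] [Semiring S] [Algebra F S] (hp : (Module.finrank F E).Prime)
    {φ ψ : E →ₐ[F] S} (h : φ ≠ ψ) : AlgHom.equalizer φ ψ = ⊥ := by
  have := Subalgebra.isSimpleOrder_of_finrank_prime F E hp
  exact (eq_bot_or_eq_top _).resolve_right fun htop ↦ h (AlgHom.equalizer_eq_top.1 htop)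

theorem mem_range_algebraMap_of_fixed {F E : Type*} [Field F] [Ring E] [IsDomain E] [Algebra F E]
    (hp : (Module.finrank F E).Prime) {σ : E →ₐ[F] E} (hσ : σ ≠ AlgHom.id F E) {x : E}
    (hx : σ x = x) : x ∈ (algebraMap F E).range :=
  Algebra.mem_bot.1 (equalizer_eq_bot_of_finrank_prime hp hσ ▸ hx)

theorem order_determined_by_antitrace_general {A M L : Type*} [CommRing A] [CommRing M]
    [CommRing L] [Algebra A M] [Algebra M L] [Algebra A L] [IsScalarTower A M L]
    [IsIntegrallyClosedIn A M] [FaithfulSMul M L] (σ : L →ₗ[A] L)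
    (hσ : ∀ x, σ x = x → x ∈ (algebraMap M L).range)
    (O O' : Subalgebra A L) (hO : O ≤ integralClosure A L) (hO' : O' ≤ integralClosure A L)
    (h : (fun x ↦ x - σ x) '' (O : Set L) = (fun x ↦ x - σ x) '' (O' : Set L)) :
    O = O' :=
  (map_antitrace_eq_map_antitrace_iff
    (fun x hx hfix ↦ mem_bot_of_isIntegral_of_mem_range hx (hσ x hfix)) hO hO').1
    (SetLike.coe_injective h)

/-- If two `O_M`-orders `O, O'` of `O_L` have the same antitrace image
`ATr(O) = ATr(O')` (where `ATr(x) = x - σ(x)`), then `O = O'`. -/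
theorem order_determined_by_antitrace (A M L : Type) [CommRing A] [IsDedekindDomain A]
    [Field M] [Field L] [Algebra A M] [IsFractionRing A M]
    [Algebra M L] [Algebra A L] [IsScalarTower A M L]
    (h2 : Module.finrank M L = 2)
    [IsDedekindDomain (integralClosure A L)]
    [Module.Finite A (integralClosure A L)]
    (σ : L ≃ₐ[M] L) (hσ : σ ≠ AlgEquiv.refl)
    (hgal : ∀ τ : L ≃ₐ[M] L, τ = AlgEquiv.refl ∨ τ = σ)
    (O O' : Subalgebra A L) (hO : O ≤ integralClosure A L) (hO' : O' ≤ integralClosure A L)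
    (h : (fun x : L => x - σ x) '' (O : Set L) = (fun x : L => x - σ x) '' (O' : Set L)) :
    O = O' := by
  have : IsIntegrallyClosedIn A M := (isIntegrallyClosed_iff_isIntegrallyClosedIn M).1 inferInstance
  have hσ' : (σ : L →ₐ[M] L) ≠ AlgHom.id M L := fun e ↦ hσ (AlgEquiv.coe_toAlgHom_injective e)
  exact order_determined_by_antitrace_general (σ.toLinearMap.restrictScalars A)
    (fun _ ↦ mem_range_algebraMap_of_fixed (h2 ▸ Nat.prime_two) hσ') O O' hO hO' h
end

section
/- Suppose a group Γ acts on a tree Δ with finite stabilizers and without inversions. Then there is a short exact sequence 1 → Γ_f → Γ → π₁(Γ\Δ) → 1, where Γ_f is the subgroup of Γ generated by all elements of finite order; in particular, the corank of Γ (the maximal rank of a free quotient of Γ) equals the first Betti number of the finite quotient graph Γ\Δ. -/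
/-!
A labelling of the oriented edges of `Γ\Δ` in a group `H`, inverse under reversal of edges, lifts to
an invariant labelling of the tree `Δ`, which integrates to a map `p : Δ → H`. Two such maps differ
by a left translation, so `p (g • v) = φ g * p v` for a homomorphism `φ : Γ → H`. Conversely, a
homomorphism `κ : Γ → H` that kills the vertex stabilizers arises in this way: put `p (g • s) = κ g`
for `s` in a tree of representatives `S`, a subtree of `Δ` that meets every orbit once. The
resulting labelling is trivial on the maximal subtree of `Γ\Δ` covered by `S`. Hence
the quotient of `Γ` by the vertex stabilizers has the universal property of the free group on the
edges of `Γ\Δ` outside a maximal subtree. As free groups are torsion-free, the kernel of `Γ` onto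
this free group contains all torsion, and it is generated by torsion if the stabilizers are torsion
groups.
-/

open MulAction SimpleGraph

namespace BassSerre

section FreeGroup

variable {α β : Type*}

theorem card_le_card_of_freeGroup_surjective [Finite α] {f : FreeGroup α →* FreeGroup β}
    (hf : Function.Surjective f) : Nat.card β ≤ Nat.card α := by
  have : Module.Finite ℤ (FreeAbelianGroup α) := .of_basis (FreeAbelianGroup.basis α)
  let fab : FreeAbelianGroup α →ₗ[ℤ] FreeAbelianGroup β :=
    (MonoidHom.toAdditive (Abelianization.map f)).toIntLinearMap
  have hfab : Function.Surjective fab := by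
    intro y
    obtain ⟨y, rfl⟩ := QuotientGroup.mk_surjective y
    obtain ⟨x, rfl⟩ := hf y
    exact ⟨Abelianization.of x, Abelianization.map_of f x⟩
  rw [← Module.finrank_eq_nat_card_basis (FreeAbelianGroup.basis α),
    ← Module.finrank_eq_nat_card_basis (FreeAbelianGroup.basis β)]
  exact LinearMap.finrank_le_finrank_of_surjective hfab

theorem card_le_card_of_surjective_of_ker_le [Finite α] {G : Type*} [Group G]
    {φ : G →* FreeGroup α} (hφ : Function.Surjective φ) {ψ : G →* FreeGroup β}
    (hψ : Function.Surjective ψ) (hker : φ.ker ≤ ψ.ker) : Nat.card β ≤ Nat.card α := by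
  refine card_le_card_of_freeGroup_surjective (f := φ.liftOfSurjective hφ ⟨ψ, hker⟩) fun y ↦ ?_
  obtain ⟨g, rfl⟩ := hψ y
  exact ⟨φ g, MonoidHom.liftOfRightInverse_comp_apply _ _ _ ⟨ψ, hker⟩ g⟩

theorem closure_isOfFinOrder_le_ker {G H : Type*} [Group G] [Group H] [IsMulTorsionFree H]
    (φ : G →* H) : Subgroup.closure {g : G | IsOfFinOrder g} ≤ φ.ker :=
  (Subgroup.closure_le _).2 fun _ hg ↦ (φ.isOfFinOrder hg).eq_one'

theorem normalClosure_le_closure_isOfFinOrder {G : Type*} [Group G] {s : Set G}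
    (hs : ∀ g ∈ s, IsOfFinOrder g) :
    Subgroup.normalClosure s ≤ Subgroup.closure {g : G | IsOfFinOrder g} := by
  refine Subgroup.closure_mono fun g hg ↦ ?_
  obtain ⟨a, ha, hag⟩ := Group.mem_conjugatesOfSet_iff.1 hg
  exact hag.isOfFinOrder (hs a ha)

end FreeGroup

section Potential

variable {V H : Type*} [Group H] {Δ : SimpleGraph V}

/-- `p` integrates the labelling `c` of the darts of `Δ`: the label of a dart is the quotient of the
values of `p` at its ends. -/
def IsPotential (c : Δ.Dart → H) (p : V → H) : Prop :=
  ∀ d : Δ.Dart, p d.snd = p d.fst * c d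

theorem IsPotential.eq_of_apply_eq (hΔ : Δ.Connected) {c : Δ.Dart → H} {p q : V → H}
    (hp : IsPotential c p) (hq : IsPotential c q) {v₀ : V} (h₀ : p v₀ = q v₀) : p = q := by
  funext v
  obtain ⟨w⟩ := hΔ.preconnected v₀ v
  induction w with
  | nil => exact h₀
  | @cons u v _ huv _ ih =>
    let d : Δ.Dart := ⟨(u, v), huv⟩
    exact ih <| calc
      p v = p u * c d := hp d
      _ = q u * c d := by rw [h₀]
      _ = q v := (hq d).symm

theorem IsPotential.const_mul {c : Δ.Dart → H} {p : V → H} (hp : IsPotential c p) (h : H) :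
    IsPotential c fun v ↦ h * p v :=
  fun d ↦ (congrArg (h * ·) (hp d)).trans (mul_assoc _ _ _).symm

theorem exists_isPotential (hΔ : Δ.IsTree) {c : Δ.Dart → H} (hc : ∀ d, c d.symm = (c d)⁻¹)
    (v₀ : V) : ∃ p : V → H, IsPotential c p ∧ p v₀ = 1 := by
  choose P hP hP_unique using hΔ.existsUnique_path v₀
  let p : V → H := fun v ↦ ((P v).darts.map c).prod
  have hp_extend (d : Δ.Dart) (hd : d.snd ∉ (P d.fst).support) : p d.snd = p d.fst * c d := by
    simp only [p, ← hP_unique d.snd _ ((hP d.fst).concat hd d.adj), Walk.darts_concat,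
      List.concat_eq_append, List.map_append, List.prod_append, List.map_singleton,
      List.prod_singleton]
  refine ⟨p, fun d ↦ ?_, by simp [p, ← hP_unique v₀ .nil .nil]⟩
  by_cases hd : d.snd ∈ (P d.fst).support
  · have hd' := hΔ.isAcyclic.ne_mem_support_of_support_of_adj_of_isPath (hP _) (hP _) d.adj hd
    have := hp_extend d.symm hd'
    rw [hc, eq_mul_inv_iff_mul_eq] at this
    exact this.symm
  · exact hp_extend d hd

end Potential

section Labelling

variable {X H : Type*} [Group H] {rev : X → X} {T B : Set X}

/-- `f` is a labelling by elements of a group of the oriented edges `X` of a graph with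
reversal map `rev`, trivial on the set `T` of edges. -/
structure IsLabelling (rev : X → X) (T : Set X) (f : X → H) : Prop where
  apply_rev : ∀ x, f (rev x) = (f x)⁻¹
  eq_one : ∀ x ∈ T, f x = 1

/-- `B` is an orientation of the edges outside `T`: of `x` and its reverse `rev x`, it contains
exactly one if `x ∉ T` and none if `x ∈ T`. -/
structure IsOrientation (rev : X → X) (T B : Set X) : Prop where
  subset_compl : B ⊆ Tᶜ
  rev_mem_iff : ∀ x ∉ T, (rev x ∈ B ↔ x ∉ B)

theorem exists_isOrientation (hrev : Function.Involutive rev) (hT : Set.MapsTo rev T T)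
    (hne : ∀ x ∉ T, rev x ≠ x) : ∃ B, IsOrientation rev T B := by
  classical
  have : LinearOrder X := linearOrderOfSTO WellOrderingRel
  refine ⟨{x | x ∉ T ∧ x < rev x}, fun _ hx ↦ hx.1, fun x hx ↦ ?_⟩
  have hrevx : rev x ∉ T := fun h ↦ hx (hrev x ▸ hT h)
  simp [hx, hrevx, hrev x, (hne x hx).le_iff_lt]

theorem IsOrientation.card_eq [Finite X] (hB : IsOrientation rev T B)
    (hrev : Function.Involutive rev) (hT : Set.MapsTo rev T T) :
    Nat.card X = T.ncard + 2 * B.ncard := by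
  have hcompl : Tᶜ = B ∪ rev '' B := by
    rw [hrev.image_eq_preimage_symm]
    ext x
    refine ⟨fun hx ↦ ?_, ?_⟩
    · rw [Set.mem_union, Set.mem_preimage, hB.rev_mem_iff x hx]
      exact em _
    · rintro (hx | hx)
      · exact hB.subset_compl hx
      · exact fun h ↦ hB.subset_compl hx (hT h)
  have hdisj : Disjoint B (rev '' B) := by
    rw [hrev.image_eq_preimage_symm, Set.disjoint_left]
    exact fun x hx hrevx ↦ (hB.rev_mem_iff x (hB.subset_compl hx)).1 hrevx hx
  rw [← Set.ncard_add_ncard_compl T, hcompl, Set.ncard_union_eq hdisj,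
    Set.ncard_image_of_injective _ hrev.injective, two_mul]

open Classical in
/-- The universal labelling trivial on `T`, where `B` is an orientation of the edges outside `T`. -/
noncomputable def freeLabel (rev : X → X) (B : Set X) (x : X) : FreeGroup B :=
  if h : x ∈ B then .of ⟨x, h⟩ else if h : rev x ∈ B then (.of ⟨rev x, h⟩)⁻¹ else 1

theorem freeLabel_coe (b : B) : freeLabel rev B b = .of b :=
  dif_pos b.2

theorem IsOrientation.isLabelling_freeLabel (hB : IsOrientation rev T B)
    (hrev : Function.Involutive rev) (hT : Set.MapsTo rev T T) :
    IsLabelling rev T (freeLabel rev B) where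
  eq_one x hx := by
    rw [freeLabel, dif_neg fun h ↦ hB.subset_compl h hx,
      dif_neg fun h ↦ hB.subset_compl h (hT hx)]
  apply_rev x := by
    by_cases hxT : x ∈ T
    · have hxB : x ∉ B := fun h ↦ hB.subset_compl h hxT
      have hrevB : rev x ∉ B := fun h ↦ hB.subset_compl h (hT hxT)
      simp [freeLabel, hrev x, hxB, hrevB]
    · by_cases hxB : x ∈ B <;> simp [freeLabel, hrev x, hB.rev_mem_iff x hxT, hxB]

theorem IsOrientation.exists_hom_freeLabel (hB : IsOrientation rev T B)
    (hT : Set.MapsTo rev T T) {f : X → H} (hf : IsLabelling rev T f) :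
    ∃ ψ : FreeGroup B →* H, ∀ x, ψ (freeLabel rev B x) = f x := by
  refine ⟨FreeGroup.lift fun b ↦ f b, fun x ↦ ?_⟩
  by_cases hxB : x ∈ B
  · simp [freeLabel, hxB]
  by_cases hxT : x ∈ T
  · have hrevB : rev x ∉ B := fun h ↦ hB.subset_compl h (hT hxT)
    simp [freeLabel, hxB, hrevB, hf.eq_one x hxT]
  · simp [freeLabel, hxB, (hB.rev_mem_iff x hxT).2 hxB, hf.apply_rev]

end Labelling

section Action

variable {G V H : Type*} [Group G] [MulAction G V] [Group H]

/-- `G` acts on the graph `Δ` by automorphisms. -/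
class GraphAction (G : Type*) {V : Type*} [Group G] [MulAction G V] (Δ : SimpleGraph V) : Prop where
  smul_adj : ∀ (g : G) {v w : V}, Δ.Adj v w → Δ.Adj (g • v) (g • w)

variable {Δ : SimpleGraph V} [GraphAction G Δ]

instance : MulAction G Δ.Dart where
  smul g d := ⟨(g • d.fst, g • d.snd), GraphAction.smul_adj g d.adj⟩
  one_smul d := Dart.ext _ _ (one_smul G d.toProd)
  mul_smul g h d := Dart.ext _ _ (mul_smul g h d.toProd)

@[simp] theorem smul_dart_fst (g : G) (d : Δ.Dart) : (g • d).fst = g • d.fst := rfl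

@[simp] theorem smul_dart_snd (g : G) (d : Δ.Dart) : (g • d).snd = g • d.snd := rfl

theorem smul_dart_symm (g : G) (d : Δ.Dart) : (g • d).symm = g • d.symm := rfl

variable (G Δ) in
/-- The oriented edges of the quotient graph `G\Δ`. -/
abbrev EdgeOrbit : Type _ := orbitRel.Quotient G Δ.Dart

/-- The reversal of oriented edges of the quotient graph `G\Δ`. -/
def EdgeOrbit.rev : EdgeOrbit G Δ → EdgeOrbit G Δ :=
  Quotient.map Dart.symm fun _ d ⟨g, hg⟩ ↦ ⟨g, by rw [← hg, smul_dart_symm]⟩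

theorem EdgeOrbit.rev_mk (d : Δ.Dart) : rev (⟦d⟧ : EdgeOrbit G Δ) = ⟦d.symm⟧ := rfl

theorem EdgeOrbit.rev_involutive : Function.Involutive (rev : EdgeOrbit G Δ → EdgeOrbit G Δ) := by
  rintro ⟨d⟩
  exact congrArg _ d.symm_symm

theorem EdgeOrbit.rev_ne (hnoinv : ∀ (g : G) (d : Δ.Dart), g • d ≠ d.symm) (x : EdgeOrbit G Δ) :
    x.rev ≠ x := by
  obtain ⟨d, rfl⟩ := Quotient.exists_rep x
  intro h
  obtain ⟨g, hg⟩ := Quotient.exact h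
  exact hnoinv g d hg

/-- `p` is a developing map with holonomy `φ` of the labelling `ℓ` of the quotient graph `G\Δ`: it
integrates the lift of `ℓ` to `Δ` and is equivariant along `φ`. -/
structure IsDevelopingMap (ℓ : EdgeOrbit G Δ → H) (φ : G →* H) (p : V → H) : Prop where
  isPotential : IsPotential (fun d : Δ.Dart ↦ ℓ ⟦d⟧) p
  map_smul : ∀ g v, p (g • v) = φ g * p v

theorem exists_isDevelopingMap (hΔ : Δ.IsTree) {ℓ : EdgeOrbit G Δ → H}
    (hℓ : ∀ x, ℓ x.rev = (ℓ x)⁻¹) (v₀ : V) :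
    ∃ (φ : G →* H) (p : V → H), IsDevelopingMap ℓ φ p ∧ p v₀ = 1 := by
  obtain ⟨p, hp, hp₀⟩ := exists_isPotential hΔ (c := fun d : Δ.Dart ↦ ℓ ⟦d⟧) (fun d ↦ hℓ ⟦d⟧) v₀
  have htranslate (g : G) : IsPotential (fun d : Δ.Dart ↦ ℓ ⟦d⟧) fun v ↦ p (g • v) := fun d ↦
    (hp (g • d)).trans (congrArg (_ * ℓ ·) orbitRel.Quotient.quotient_smul_eq)
  have hsmul (g : G) (v : V) : p (g • v) = p (g • v₀) * p v :=
    congrFun ((htranslate g).eq_of_apply_eq hΔ.connected (hp.const_mul (p (g • v₀)))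
      (v₀ := v₀) (by rw [hp₀, mul_one])) v
  exact ⟨MonoidHom.mk' (fun g ↦ p (g • v₀)) fun g h ↦ by rw [mul_smul, hsmul], p, ⟨hp, hsmul⟩, hp₀⟩

theorem exists_isDevelopingMap_of_map_smul {φ : G →* H} {p : V → H}
    (hp : ∀ g v, p (g • v) = φ g * p v) :
    ∃ ℓ : EdgeOrbit G Δ → H, IsDevelopingMap ℓ φ p := by
  refine ⟨Quotient.lift (fun d : Δ.Dart ↦ (p d.fst)⁻¹ * p d.snd) ?_, ⟨fun d ↦ ?_, hp⟩⟩
  · rintro _ d ⟨g, rfl⟩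
    simp [hp, mul_assoc]
  · exact (mul_inv_cancel_left _ _).symm

namespace IsDevelopingMap

variable {ℓ : EdgeOrbit G Δ → H} {φ : G →* H} {p : V → H}

theorem label_mk (hp : IsDevelopingMap ℓ φ p) (d : Δ.Dart) : ℓ ⟦d⟧ = (p d.fst)⁻¹ * p d.snd :=
  eq_inv_mul_of_mul_eq (hp.isPotential d).symm

theorem label_rev (hp : IsDevelopingMap ℓ φ p) (x : EdgeOrbit G Δ) : ℓ x.rev = (ℓ x)⁻¹ := by
  obtain ⟨d, rfl⟩ := Quotient.exists_rep x
  rw [EdgeOrbit.rev_mk, hp.label_mk, hp.label_mk, mul_inv_rev, inv_inv]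
  rfl

theorem map {K : Type*} [Group K] (hp : IsDevelopingMap ℓ φ p) (ψ : H →* K) :
    IsDevelopingMap (ψ ∘ ℓ) (ψ.comp φ) (ψ ∘ p) where
  isPotential d := by
    simp only [Function.comp_apply, hp.isPotential d, map_mul]
  map_smul g v := by
    simp only [Function.comp_apply, hp.map_smul, map_mul, MonoidHom.comp_apply]

theorem holonomy_unique (hΔ : Δ.Connected) (hp : IsDevelopingMap ℓ φ p) {φ' : G →* H} {p' : V → H}
    (hp' : IsDevelopingMap ℓ φ' p') {v₀ : V} (h₀ : p v₀ = p' v₀) : φ = φ' := by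
  obtain rfl := hp.isPotential.eq_of_apply_eq hΔ hp'.isPotential h₀
  ext g
  exact mul_right_cancel ((hp.map_smul g v₀).symm.trans (hp'.map_smul g v₀))

theorem holonomy_eq_one (hp : IsDevelopingMap ℓ φ p) {g : G} {v : V} (hgv : g • v = v) :
    φ g = 1 := by
  have := hp.map_smul g v
  rwa [hgv, right_eq_mul] at this

end IsDevelopingMap

end Action

section TreeOfRepresentatives

variable {G V H : Type*} [Group G] [MulAction G V] [Group H] {Δ : SimpleGraph V} {S : Set V}

/-- `S` spans a connected subgraph of `Δ` and meets every orbit at most once. -/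
structure IsPartialTreeOfRepresentatives (G : Type*) {V : Type*} [Group G] [MulAction G V]
    (Δ : SimpleGraph V) (S : Set V) : Prop where
  connected : (Δ.induce S).Connected
  smul_eq_of_smul_mem : ∀ (g : G), ∀ s ∈ S, g • s ∈ S → g • s = s

/-- `S` spans a tree of representatives for the action of `G` on the tree `Δ`, that is, a subtree
meeting every orbit exactly once. Acyclicity is inherited from `Δ`, so only connectedness is
required. -/
structure IsTreeOfRepresentatives (G : Type*) {V : Type*} [Group G] [MulAction G V]
    (Δ : SimpleGraph V) (S : Set V) : Prop extends IsPartialTreeOfRepresentatives G Δ S where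
  exists_smul_mem : ∀ v, ∃ g : G, g • v ∈ S

theorem IsPartialTreeOfRepresentatives.sUnion {C : Set (Set V)} (hC : IsChain (· ⊆ ·) C)
    (hne : C.Nonempty) (h : ∀ S ∈ C, IsPartialTreeOfRepresentatives G Δ S) :
    IsPartialTreeOfRepresentatives G Δ (⋃₀ C) where
  connected := by
    refine induce_sUnion_connected_of_pairwise_not_disjoint hne (fun {S S'} hS hS' ↦ ?_)
      fun hS ↦ (h _ hS).connected
    have hS_ne : S.Nonempty := Set.nonempty_coe_sort.1 (h S hS).connected.nonempty
    have hS'_ne : S'.Nonempty := Set.nonempty_coe_sort.1 (h S' hS').connected.nonempty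
    rcases hC.total hS hS' with hle | hle
    · rwa [Set.inter_eq_left.2 hle]
    · rwa [Set.inter_eq_right.2 hle]
  smul_eq_of_smul_mem := by
    rintro g s ⟨S, hS, hsS⟩ ⟨S', hS', hsS'⟩
    rcases hC.total hS hS' with hle | hle
    · exact (h S' hS').smul_eq_of_smul_mem g s (hle hsS) hsS'
    · exact (h S hS).smul_eq_of_smul_mem g s hsS (hle hsS')

theorem IsPartialTreeOfRepresentatives.insert (hS : IsPartialTreeOfRepresentatives G Δ S)
    {s v : V} (hs : s ∈ S) (hsv : Δ.Adj s v) (hv : ∀ g : G, g • v ∉ S) :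
    IsPartialTreeOfRepresentatives G Δ (insert v S) where
  connected := by
    rw [Set.insert_eq, Set.union_comm]
    exact connected_induce_union hS.connected.preconnected Preconnected.of_subsingleton hs
      (Set.mem_singleton v) hsv
  smul_eq_of_smul_mem := by
    rintro g t (rfl | ht) (hgt | hgt)
    · exact hgt
    · exact absurd hgt (hv g)
    · exact absurd (by rwa [← hgt, inv_smul_smul]) (hv g⁻¹)
    · exact hS.smul_eq_of_smul_mem g t ht hgt

theorem isPartialTreeOfRepresentatives_singleton (v : V) :
    IsPartialTreeOfRepresentatives G Δ {v} where
  connected := .of_subsingleton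
  smul_eq_of_smul_mem := by
    rintro g _ rfl hg
    exact hg

theorem exists_isTreeOfRepresentatives [GraphAction G Δ] (hΔ : Δ.Connected) :
    ∃ S, IsTreeOfRepresentatives G Δ S := by
  obtain ⟨v₀⟩ := hΔ.nonempty
  obtain ⟨S, hv₀S, hS⟩ := zorn_subset_nonempty {S | IsPartialTreeOfRepresentatives G Δ S}
    (fun C hC hchain hne ↦ ⟨⋃₀ C, .sUnion hchain hne fun _ hS ↦ hC hS,
      fun _ ↦ Set.subset_sUnion_of_mem⟩) {v₀} (isPartialTreeOfRepresentatives_singleton v₀)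
  refine ⟨S, hS.prop, ?_⟩
  by_contra! ⟨v, hv⟩
  -- A walk from `S` to the missed vertex `v` leaves the `G`-translates of `S` along some dart.
  obtain ⟨w⟩ := hΔ.preconnected v₀ v
  obtain ⟨d, -, ⟨g, hg⟩, hd⟩ := w.exists_boundary_dart {u | ∃ g : G, g • u ∈ S}
    ⟨1, by simpa using hv₀S⟩ (by simpa using hv)
  have hinsert : IsPartialTreeOfRepresentatives G Δ (insert (g • d.snd) S) :=
    hS.prop.insert hg (GraphAction.smul_adj g d.adj) fun h hh ↦ hd ⟨h * g, by rwa [mul_smul]⟩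
  exact hd ⟨g, hS.le_of_ge hinsert (Set.subset_insert _ _) (Set.mem_insert _ _)⟩

namespace IsTreeOfRepresentatives

theorem bijective_mk (hS : IsTreeOfRepresentatives G Δ S) :
    Function.Bijective fun s : S ↦ (⟦s.1⟧ : orbitRel.Quotient G V) := by
  constructor
  · intro s t hst
    obtain ⟨g, hg : g • t.1 = s.1⟩ := Quotient.exact hst
    exact Subtype.ext (hg ▸ hS.smul_eq_of_smul_mem g t t.2 (hg ▸ s.2))
  · rintro ⟨v⟩
    obtain ⟨g, hg⟩ := hS.exists_smul_mem v
    exact ⟨⟨g • v, hg⟩, orbitRel.Quotient.quotient_smul_eq⟩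

theorem exists_map_smul (hS : IsTreeOfRepresentatives G Δ S) {φ : G →* H}
    (hφ : ∀ (g : G) (v : V), g • v = v → φ g = 1) :
    ∃ p : V → H, (∀ g v, p (g • v) = φ g * p v) ∧ ∀ s ∈ S, p s = 1 := by
  choose γ hγ using hS.exists_smul_mem
  have key (g : G) (v : V) (hgv : g • v ∈ S) : φ g = φ (γ v) := by
    have hfix : (g * (γ v)⁻¹) • γ v • v = γ v • v :=
      hS.smul_eq_of_smul_mem _ _ (hγ v) (by simpa [mul_smul] using hgv)
    simpa [mul_inv_eq_one] using hφ _ _ hfix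
  refine ⟨fun v ↦ (φ (γ v))⁻¹, fun g v ↦ ?_, fun s hs ↦ ?_⟩
  · have hγ_smul := key (γ (g • v) * g) v (by simpa only [mul_smul] using hγ (g • v))
    simp only [← hγ_smul, map_mul, mul_inv_rev, mul_inv_cancel_left]
  · simp only [← key 1 s (by rwa [one_smul]), map_one, inv_one]

end IsTreeOfRepresentatives

variable [GraphAction G Δ]

variable (G Δ) in
/-- The projection of the oriented edges of `Δ` inside `S` to the quotient graph `G\Δ`. -/
def inducedEdgeOrbit (S : Set V) (d : (Δ.induce S).Dart) : EdgeOrbit G Δ :=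
  ⟦(Embedding.induce S).toHom.mapDart d⟧

variable (G Δ) in
/-- The oriented edges of the quotient graph `G\Δ` that have a representative inside `S`. If `S`
spans a tree of representatives, they form a maximal subtree of `G\Δ`. -/
def treeEdges (S : Set V) : Set (EdgeOrbit G Δ) := Set.range (inducedEdgeOrbit G Δ S)

theorem mapsTo_rev_treeEdges : Set.MapsTo EdgeOrbit.rev (treeEdges G Δ S) (treeEdges G Δ S) := by
  rintro _ ⟨d, rfl⟩
  exact ⟨d.symm, rfl⟩

theorem IsPartialTreeOfRepresentatives.inducedEdgeOrbit_injective
    (hS : IsPartialTreeOfRepresentatives G Δ S) :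
    Function.Injective (inducedEdgeOrbit G Δ S) := by
  intro d e hde
  obtain ⟨g, hg⟩ := Quotient.exact hde
  have hfst : g • e.fst.1 = d.fst.1 := congrArg (·.fst) hg
  have hsnd : g • e.snd.1 = d.snd.1 := congrArg (·.snd) hg
  refine Dart.ext _ _ (Prod.ext (Subtype.ext ?_) (Subtype.ext ?_))
  · exact hfst ▸ hS.smul_eq_of_smul_mem g _ e.fst.2 (hfst ▸ d.fst.2)
  · exact hsnd ▸ hS.smul_eq_of_smul_mem g _ e.snd.2 (hsnd ▸ d.snd.2)

theorem IsTreeOfRepresentatives.ncard_treeEdges [Finite (orbitRel.Quotient G V)]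
    (hΔ : Δ.IsAcyclic) (hS : IsTreeOfRepresentatives G Δ S) :
    (treeEdges G Δ S).ncard + 2 = 2 * Nat.card (orbitRel.Quotient G V) := by
  classical
  have htree : (Δ.induce S).IsTree := ⟨hS.connected, hΔ.induce S⟩
  have : Finite S := .of_injective _ hS.bijective_mk.injective
  have := Fintype.ofFinite S
  rw [treeEdges, Set.ncard_range_of_injective hS.inducedEdgeOrbit_injective,
    ← Nat.card_eq_of_bijective _ hS.bijective_mk,
    Nat.card_eq_fintype_card, Nat.card_eq_fintype_card, dart_card_eq_twice_card_edges,
    ← htree.card_edgeFinset, mul_add]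

theorem IsDevelopingMap.isLabelling {ℓ : EdgeOrbit G Δ → H} {φ : G →* H} {p : V → H}
    (hp : IsDevelopingMap ℓ φ p) (hpS : ∀ s ∈ S, p s = 1) :
    IsLabelling EdgeOrbit.rev (treeEdges G Δ S) ℓ where
  apply_rev := hp.label_rev
  eq_one := by
    rintro _ ⟨d, rfl⟩
    rw [inducedEdgeOrbit, hp.label_mk]
    simp [hpS]

theorem IsDevelopingMap.eq_one_of_mem (hS : (Δ.induce S).Connected) {ℓ : EdgeOrbit G Δ → H}
    (hℓ : ∀ x ∈ treeEdges G Δ S, ℓ x = 1) {φ : G →* H} {p : V → H} (hp : IsDevelopingMap ℓ φ p)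
    {s₀ : V} (hs₀ : s₀ ∈ S) (hps₀ : p s₀ = 1) {s : V} (hs : s ∈ S) : p s = 1 := by
  have hpS : IsPotential (fun _ : (Δ.induce S).Dart ↦ 1) (fun s : S ↦ p s) := fun d ↦
    (hp.isPotential ((Embedding.induce S).toHom.mapDart d)).trans (congrArg _ (hℓ _ ⟨d, rfl⟩))
  have hone : IsPotential (fun _ : (Δ.induce S).Dart ↦ (1 : H)) fun _ ↦ 1 :=
    fun _ ↦ (mul_one 1).symm
  exact congrFun (hpS.eq_of_apply_eq hS hone (v₀ := ⟨s₀, hs₀⟩) hps₀) ⟨s, hs⟩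

theorem IsDevelopingMap.label_mem_range (hS : ∀ v, ∃ g : G, g • v ∈ S)
    {ℓ : EdgeOrbit G Δ → H} {φ : G →* H} {p : V → H} (hp : IsDevelopingMap ℓ φ p)
    (hpS : ∀ s ∈ S, p s = 1) (x : EdgeOrbit G Δ) : ℓ x ∈ φ.range := by
  have hp_mem (v : V) : p v ∈ φ.range := by
    obtain ⟨g, hg⟩ := hS v
    have := hp.map_smul g v
    rw [hpS _ hg] at this
    exact eq_inv_of_mul_eq_one_right this.symm ▸ inv_mem ⟨g, rfl⟩
  obtain ⟨d, rfl⟩ := Quotient.exists_rep x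
  rw [hp.label_mk]
  exact mul_mem (inv_mem (hp_mem _)) (hp_mem _)

end TreeOfRepresentatives

section StructureTheorem

variable {G V : Type*} [Group G] [MulAction G V] {Δ : SimpleGraph V} [GraphAction G Δ] {S : Set V}
  {B : Set (EdgeOrbit G Δ)}

theorem exists_comp_eq_of_isDevelopingMap_freeLabel {H : Type*} [Group H] (hΔ : Δ.Connected)
    (hS : IsTreeOfRepresentatives G Δ S) (hB : IsOrientation EdgeOrbit.rev (treeEdges G Δ S) B)
    {φ : G →* FreeGroup B} {p : V → FreeGroup B}
    (hp : IsDevelopingMap (freeLabel EdgeOrbit.rev B) φ p) (hpS : ∀ s ∈ S, p s = 1)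
    {κ : G →* H} (hκ : ∀ (g : G) (v : V), g • v = v → κ g = 1) :
    ∃ ψ : FreeGroup B →* H, ψ.comp φ = κ := by
  obtain ⟨q, hq_smul, hqS⟩ := hS.exists_map_smul hκ
  obtain ⟨ℓ, hq⟩ := exists_isDevelopingMap_of_map_smul (Δ := Δ) hq_smul
  obtain ⟨ψ, hψ⟩ := hB.exists_hom_freeLabel mapsTo_rev_treeEdges (hq.isLabelling hqS)
  obtain ⟨⟨s, hs⟩⟩ := hS.connected.nonempty
  have hψp : IsDevelopingMap ℓ (ψ.comp φ) (ψ ∘ p) := funext hψ ▸ hp.map ψ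
  exact ⟨ψ, hψp.holonomy_unique hΔ hq (v₀ := s) (by simp [hpS s hs, hqS s hs])⟩

theorem exists_freeGroup_surjective_ker_eq (hΔ : Δ.IsTree)
    (hS : IsTreeOfRepresentatives G Δ S) (hB : IsOrientation EdgeOrbit.rev (treeEdges G Δ S) B) :
    ∃ φ : G →* FreeGroup B, Function.Surjective φ ∧
      φ.ker = Subgroup.normalClosure {g : G | ∃ v : V, g • v = v} := by
  have hlabel := hB.isLabelling_freeLabel EdgeOrbit.rev_involutive mapsTo_rev_treeEdges
  obtain ⟨⟨s₀, hs₀⟩⟩ := hS.connected.nonempty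
  obtain ⟨φ, p, hp, hps₀⟩ := exists_isDevelopingMap hΔ hlabel.apply_rev s₀
  have hpS (s : V) (hs : s ∈ S) : p s = 1 :=
    hp.eq_one_of_mem hS.connected hlabel.eq_one hs₀ hps₀ hs
  refine ⟨φ, ?_, le_antisymm (fun g hg ↦ ?_) ?_⟩
  · rw [← MonoidHom.range_eq_top, eq_top_iff, ← FreeGroup.closure_range_of, Subgroup.closure_le]
    rintro _ ⟨b, rfl⟩
    exact freeLabel_coe (rev := EdgeOrbit.rev) b ▸ hp.label_mem_range hS.exists_smul_mem hpS b
  · obtain ⟨ψ, hψ⟩ := exists_comp_eq_of_isDevelopingMap_freeLabel hΔ.connected hS hB hp hpS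
      (κ := QuotientGroup.mk' (Subgroup.normalClosure {g : G | ∃ v : V, g • v = v}))
      fun g v hgv ↦ (QuotientGroup.eq_one_iff g).2 (Subgroup.subset_normalClosure ⟨v, hgv⟩)
    have hg' := DFunLike.congr_fun hψ g
    rw [MonoidHom.comp_apply, MonoidHom.mem_ker.1 hg, map_one] at hg'
    exact (QuotientGroup.eq_one_iff g).1 hg'.symm
  · exact Subgroup.normalClosure_le_normal fun g ⟨v, hgv⟩ ↦ hp.holonomy_eq_one hgv

theorem exists_freeGroup_fin_surjective_ker_eq (hΔ : Δ.IsTree)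
    (hnoinv : ∀ (g : G) (d : Δ.Dart), g • d ≠ d.symm) [Finite (orbitRel.Quotient G V)]
    [Finite (EdgeOrbit G Δ)] {b : ℕ}
    (hb : b + Nat.card (orbitRel.Quotient G V) = Nat.card (EdgeOrbit G Δ) / 2 + 1) :
    ∃ φ : G →* FreeGroup (Fin b), Function.Surjective φ ∧
      φ.ker = Subgroup.normalClosure {g : G | ∃ v : V, g • v = v} := by
  obtain ⟨S, hS⟩ := exists_isTreeOfRepresentatives (G := G) hΔ.connected
  obtain ⟨B, hB⟩ := exists_isOrientation EdgeOrbit.rev_involutive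
    (mapsTo_rev_treeEdges (S := S)) fun x _ ↦ x.rev_ne hnoinv
  have hBcard : Nat.card B = b := by
    have hV := hS.ncard_treeEdges hΔ.isAcyclic
    have hE := hB.card_eq EdgeOrbit.rev_involutive mapsTo_rev_treeEdges
    rw [← Nat.card_coe_set_eq B] at hE
    omega
  obtain ⟨φ, hφ, hker⟩ := exists_freeGroup_surjective_ker_eq hΔ hS hB
  let e := FreeGroup.freeGroupCongr (Finite.equivFinOfCardEq hBcard)
  exact ⟨e.toMonoidHom.comp φ, e.surjective.comp hφ, hker ▸ MonoidHom.ker_mulEquiv_comp φ e⟩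

end StructureTheorem

section SerreGraph

variable {G V E : Type*} [Group G] [MulAction G V] [MulAction G E] {bar : E → E} {src : E → V}
  {Δ : SimpleGraph V} [GraphAction G Δ]

theorem exists_equiv_dart
    (hbar : ∀ e, bar (bar e) = e)
    (hsrc_smul : ∀ (g : G) (e : E), src (g • e) = g • src e)
    (hbar_smul : ∀ (g : G) (e : E), bar (g • e) = g • bar e)
    (hinj : ∀ e e' : E, src e = src e' → src (bar e) = src (bar e') → e = e')
    (hΔ : ∀ v w : V, Δ.Adj v w ↔ ∃ e, src e = v ∧ src (bar e) = w) :
    ∃ toDart : E ≃ Δ.Dart, (∀ e, toDart (bar e) = (toDart e).symm) ∧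
      ∀ (g : G) (e : E), toDart (g • e) = g • toDart e := by
  let toDart (e : E) : Δ.Dart := ⟨(src e, src (bar e)), (hΔ _ _).2 ⟨e, rfl, rfl⟩⟩
  have htoDart : Function.Bijective toDart := by
    refine ⟨fun e e' h ↦ hinj e e' (congrArg (·.fst) h) (congrArg (·.snd) h), fun d ↦ ?_⟩
    obtain ⟨e, hfst, hsnd⟩ := (hΔ _ _).1 d.adj
    exact ⟨e, Dart.ext _ _ (Prod.ext hfst hsnd)⟩
  refine ⟨.ofBijective toDart htoDart, fun e ↦ Dart.ext _ _ ?_, fun g e ↦ Dart.ext _ _ ?_⟩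
  · exact Prod.ext rfl (congrArg src (hbar e))
  · exact Prod.ext (hsrc_smul g e) ((congrArg src (hbar_smul g e)).trans (hsrc_smul g _))

theorem nonempty_orbitRel_quotient_equiv {X Y : Type*} [MulAction G X] [MulAction G Y] (e : X ≃ Y)
    (he : ∀ (g : G) (x : X), e (g • x) = g • e x) :
    Nonempty (orbitRel.Quotient G X ≃ orbitRel.Quotient G Y) :=
  ⟨Quotient.congr e fun x y ↦ by
    simp only [orbitRel_apply, mem_orbit_iff, ← he, e.injective.eq_iff]⟩

end SerreGraph

end BassSerre

open BassSerre in
theorem corank_eq_betti_of_action_on_tree_general {G V E : Type*} [Group G]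
    [MulAction G V] [MulAction G E]
    (bar : E → E) (src : E → V)
    (hbar : ∀ e, bar (bar e) = e)
    (hsrc_smul : ∀ (g : G) (e : E), src (g • e) = g • src e)
    (hbar_smul : ∀ (g : G) (e : E), bar (g • e) = g • bar e)
    (hinj : ∀ e e' : E, src e = src e' → src (bar e) = src (bar e') → e = e')
    (Δ : SimpleGraph V)
    (hΔ : ∀ v w : V, Δ.Adj v w ↔ ∃ e, src e = v ∧ src (bar e) = w)
    (htree : Δ.IsTree)
    (hnoinv : ∀ (g : G) (e : E), g • e ≠ bar e)
    (hstab : ∀ (g : G) (v : V), g • v = v → IsOfFinOrder g)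
    [Finite (Quotient (MulAction.orbitRel G V))]
    [Finite (Quotient (MulAction.orbitRel G E))]
    (b : ℕ)
    (hb : b + Nat.card (Quotient (MulAction.orbitRel G V)) =
      Nat.card (Quotient (MulAction.orbitRel G E)) / 2 + 1) :
    (∃ φ : G →* FreeGroup (Fin b), Function.Surjective φ ∧
      φ.ker = Subgroup.closure {g : G | IsOfFinOrder g}) ∧
    (∀ (k : ℕ) (ψ : G →* FreeGroup (Fin k)), Function.Surjective ψ → k ≤ b) := by
  have : GraphAction G Δ := ⟨fun g v w hvw ↦ by
    obtain ⟨e, rfl, rfl⟩ := (hΔ v w).1 hvw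
    exact (hΔ _ _).2 ⟨g • e, hsrc_smul g e, by rw [hbar_smul, hsrc_smul]⟩⟩
  obtain ⟨toDart, hsymm, hsmul⟩ := exists_equiv_dart (Δ := Δ) hbar hsrc_smul hbar_smul hinj hΔ
  obtain ⟨edgeEquiv⟩ := nonempty_orbitRel_quotient_equiv toDart hsmul
  have : Finite (EdgeOrbit G Δ) := .of_equiv _ edgeEquiv
  have hnoinv_dart (g : G) (d : Δ.Dart) : g • d ≠ d.symm := by
    obtain ⟨e, rfl⟩ := toDart.surjective d
    rw [← hsmul, ← hsymm]
    exact toDart.injective.ne (hnoinv g e)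
  rw [Nat.card_congr edgeEquiv] at hb
  obtain ⟨φ, hφ, hker⟩ := exists_freeGroup_fin_surjective_ker_eq htree hnoinv_dart hb
  have hker_torsion : φ.ker = Subgroup.closure {g : G | IsOfFinOrder g} := by
    refine le_antisymm ?_ (closure_isOfFinOrder_le_ker φ)
    exact hker ▸ normalClosure_le_closure_isOfFinOrder fun g ⟨v, hgv⟩ ↦ hstab g v hgv
  refine ⟨⟨φ, hφ, hker_torsion⟩, fun k ψ hψ ↦ ?_⟩
  simpa using card_le_card_of_surjective_of_ker_le hφ hψ
    (hker_torsion ▸ closure_isOfFinOrder_le_ker ψ)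

/-- If `Γ` acts on a tree without inversions, with finite stabilizers and finite
quotient graph, then there is a short exact sequence
`1 → Γ_f → Γ → π₁(Γ\Δ) → 1` where `Γ_f` is the subgroup generated by the torsion
elements and `π₁(Γ\Δ)` is free of rank the first Betti number `b = 1 + e − v` of the
quotient graph; in particular the corank of `Γ` equals `b`. -/
theorem corank_eq_betti_of_action_on_tree (G : Type) [Group G] (V E : Type)
    [MulAction G V] [MulAction G E]
    (bar : E → E) (src : E → V)
    (hbar : ∀ e, bar (bar e) = e) (hbne : ∀ e, bar e ≠ e)
    (hsrc_smul : ∀ (g : G) (e : E), src (g • e) = g • src e)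
    (hbar_smul : ∀ (g : G) (e : E), bar (g • e) = g • bar e)
    (hinj : ∀ e e' : E, src e = src e' → src (bar e) = src (bar e') → e = e')
    (Δ : SimpleGraph V)
    (hΔ : ∀ v w : V, Δ.Adj v w ↔ ∃ e, src e = v ∧ src (bar e) = w)
    (htree : Δ.IsTree)
    (hnoinv : ∀ (g : G) (e : E), g • e ≠ bar e)
    [∀ v : V, Finite (MulAction.stabilizer G v)]
    [∀ e : E, Finite (MulAction.stabilizer G e)]
    [Finite (Quotient (MulAction.orbitRel G V))]
    [Finite (Quotient (MulAction.orbitRel G E))]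
    (b : ℕ)
    (hb : b + Nat.card (Quotient (MulAction.orbitRel G V)) =
      Nat.card (Quotient (MulAction.orbitRel G E)) / 2 + 1) :
    (∃ φ : G →* FreeGroup (Fin b), Function.Surjective φ ∧
      φ.ker = Subgroup.closure {g : G | IsOfFinOrder g}) ∧
    (∀ (k : ℕ) (ψ : G →* FreeGroup (Fin k)), Function.Surjective ψ → k ≤ b) := by
  refine corank_eq_betti_of_action_on_tree_general bar src hbar hsrc_smul hbar_smul hinj Δ hΔ htree
    hnoinv (fun g v hgv ↦ ?_) b hb
  exact (stabilizer G v).subtype.isOfFinOrder (isOfFinOrder_of_finite ⟨g, hgv⟩)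
end
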